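/- arXiv:2407.12586 — 3 statements merged into one kernel-verified Lean document; each statement's English description precedes it below -/
import Mathlib

section
/- Let t ≥ 3 and let a_1 > a_2 > ⋯ > a_t be positive integers such that the numbers 2^{a_1}+1, …, 2^{a_t}+1 are pairwise coprime. Then there exists a rational number x with odd denominator such that V(2; a_1, …, a_t; x) < −1/2. -/
/-- `IsV2 V` says that `V : ℚ → ℚ` is the Kubert `V`-function in characteristic 2:
for any rational `x` (with odd denominator), any `k ≥ 1` and any integer `a` with
`0 ≤ a < 2^k - 1` such that `x - a/(2^k - 1)` is an integer, `V x` equals the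
binary digit sum of `a` divided by `k`. -/
def IsV2 (V : ℚ → ℚ) : Prop :=
  ∀ (x : ℚ) (k a : ℕ), 0 < k → a < 2 ^ k - 1 →
    (∃ z : ℤ, x - (a : ℚ) / ((2 : ℚ) ^ k - 1) = (z : ℚ)) →
    V x = ((Nat.digits 2 a).sum : ℚ) / (k : ℚ)

/-- `Vmulti V r x = V(2; r₁, …, r_t; x) = ∑_{S ⊆ {1,…,t}} (-1)^{t - |S|} V((∏_{j ∈ S} (2^{r_j}+1)) x)`. -/
def Vmulti (V : ℚ → ℚ) {t : ℕ} (r : Fin t → ℕ) (x : ℚ) : ℚ :=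
  ∑ S : Finset (Fin t), (-1 : ℚ) ^ (t - S.card) * V ((∏ j ∈ S, ((2 : ℚ) ^ (r j) + 1)) * x)

def II (x : ℚ) : Prop := ∃ z : ℤ, x = z

lemma II.add {x y : ℚ} (hx : II x) (hy : II y) : II (x + y) := by
  obtain ⟨a, rfl⟩ := hx; obtain ⟨b, rfl⟩ := hy; exact ⟨a + b, by push_cast; ring⟩
lemma II.neg {x : ℚ} (hx : II x) : II (-x) := by
  obtain ⟨a, rfl⟩ := hx; exact ⟨-a, by push_cast; ring⟩
lemma II.mul {x y : ℚ} (hx : II x) (hy : II y) : II (x * y) := by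
  obtain ⟨a, rfl⟩ := hx; obtain ⟨b, rfl⟩ := hy; exact ⟨a * b, by push_cast; ring⟩
lemma II.nat (n : ℕ) : II (n : ℚ) := ⟨n, by simp⟩
lemma II.natmul {x : ℚ} (n : ℕ) (hx : II x) : II (n * x) := (II.nat n).mul hx
lemma II.add_iff {x y : ℚ} (hy : II y) : II (x + y) ↔ II x :=
  ⟨fun h => by simpa using h.add hy.neg, fun h => h.add hy⟩

lemma II.coprime {a b : ℕ} (h : Nat.Coprime a b) {x : ℚ} (ha : II (a * x)) (hb : II (b * x)) :
    II x := by
  have hz : IsCoprime (a : ℤ) (b : ℤ) := Nat.isCoprime_iff_coprime.mpr h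
  obtain ⟨u, v, huv⟩ := hz
  obtain ⟨p, hp⟩ := ha
  obtain ⟨q, hq⟩ := hb
  refine ⟨u * p + v * q, ?_⟩
  have : (u : ℚ) * a + v * b = 1 := by exact_mod_cast huv
  push_cast
  rw [← hp, ← hq]
  linear_combination (-x) * this

def OD (x : ℚ) : Prop := ∃ N : ℕ, Odd N ∧ II (N * x)

lemma OD.exk {x : ℚ} (h : OD x) : ∃ k : ℕ, 0 < k ∧ II (((2 : ℚ) ^ k - 1) * x) := by
  obtain ⟨N, hN, hx⟩ := h
  refine ⟨N.totient, Nat.totient_pos.mpr hN.pos, ?_⟩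
  have h1 : 2 ^ N.totient ≡ 1 [MOD N] := Nat.ModEq.pow_totient (Nat.coprime_two_left.mpr hN)
  have h2 : N ∣ 2 ^ N.totient - 1 := (Nat.modEq_iff_dvd' Nat.one_le_two_pow).mp h1.symm
  obtain ⟨c, hc⟩ := h2
  have h3 : (2 : ℚ) ^ N.totient - 1 = c * N := by
    have : 2 ^ N.totient = N * c + 1 := by have := @Nat.one_le_two_pow N.totient; omega
    have : (2 : ℚ) ^ N.totient = N * c + 1 := by exact_mod_cast this
    rw [this]; ring
  rw [h3, mul_assoc]
  exact II.natmul c hx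

lemma OD.add {x y : ℚ} (hx : OD x) (hy : OD y) : OD (x + y) := by
  obtain ⟨N, hN, h⟩ := hx
  obtain ⟨M, hM, h'⟩ := hy
  refine ⟨N * M, hN.mul hM, ?_⟩
  have : ((N * M : ℕ) : ℚ) * (x + y) = M * (N * x) + N * (M * y) := by push_cast; ring
  rw [this]; exact (h.natmul _).add (h'.natmul _)
lemma OD.neg {x : ℚ} (hx : OD x) : OD (-x) := by
  obtain ⟨N, hN, h⟩ := hx
  exact ⟨N, hN, by simpa using h.neg⟩
lemma OD.natmul {x : ℚ} (n : ℕ) (hx : OD x) : OD (n * x) := by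
  obtain ⟨N, hN, h⟩ := hx
  refine ⟨N, hN, ?_⟩
  have : (N : ℚ) * (n * x) = n * (N * x) := by ring
  rw [this]; exact h.natmul n
lemma OD.frac (b : ℚ) (hb : II b) (n : ℕ) (hn : Odd n) : OD (b / n) :=
  ⟨n, hn, by
    have : (n : ℚ) ≠ 0 := by have := hn.pos; positivity
    rw [mul_div_cancel₀ _ this]; exact hb⟩
lemma OD.den {x : ℚ} (hx : OD x) : Odd x.den := by
  obtain ⟨N, hN, z, h⟩ := hx
  have hN0 : (N : ℚ) ≠ 0 := by have := hN.pos; positivity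
  have : x = Rat.divInt z N := by
    rw [Rat.divInt_eq_div, eq_div_iff (by exact_mod_cast hN0)]; push_cast; linarith
  have h2 := Rat.den_dvd z N
  rw [← this] at h2
  exact hN.of_dvd_nat (by exact_mod_cast h2)

lemma digsum_formula (k : ℕ) : ∀ a : ℕ, a < 2 ^ k →
    ∑ j ∈ Finset.range k, a / 2 ^ (j + 1) + (Nat.digits 2 a).sum = a := by
  induction k with
  | zero => intro a ha; have : a = 0 := by simpa using ha
            subst this; simp
  | succ k ih =>
    intro a ha
    rcases Nat.eq_zero_or_pos a with rfl | hp
    · simp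
    have := ih (a / 2) (by rw [pow_succ] at ha; omega)
    rw [Finset.sum_range_succ', Nat.digits_def' (by norm_num) hp, List.sum_cons]
    have h2 : ∀ j, a / 2 ^ (j + 1 + 1) = a / 2 / 2 ^ (j + 1) := by
      intro j; rw [Nat.div_div_eq_div_mul, pow_succ' 2 (j+1)]
    simp only [h2]
    simp only [zero_add, pow_one]
    omega

lemma floor_rot (k a i : ℕ) (ha : a < 2 ^ k - 1) (hi : i < k) :
    ⌊(2 : ℚ) ^ i * (a / ((2 : ℚ) ^ k - 1))⌋ = (a / 2 ^ (k - i) : ℕ) := by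
  have hk : 2 ^ k = 2 ^ i * 2 ^ (k - i) := by rw [← pow_add]; congr 1; omega
  set P := 2 ^ i with hP
  set Q := 2 ^ (k - i) with hQ
  have hP1 : 1 ≤ P := Nat.one_le_two_pow
  have hQ1 : 1 ≤ Q := Nat.one_le_two_pow
  have hQ2 : 2 ≤ Q := by
    calc 2 = 2 ^ 1 := by norm_num
      _ ≤ Q := Nat.pow_le_pow_right (by norm_num) (by omega)
  set q := a / Q
  set r := a % Q
  have har : Q * q + r = a := Nat.div_add_mod a Q
  have hr : r < Q := Nat.mod_lt _ (by omega)
  have hPQ : 1 < P * Q := by nlinarith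
  have hden : (0 : ℚ) < (2 : ℚ) ^ k - 1 := by
    have : (2 : ℚ) ^ k = (P * Q : ℕ) := by rw [← hk]; push_cast; rfl
    rw [this]
    have : (1 : ℚ) < (P * Q : ℕ) := by exact_mod_cast hPQ
    linarith
  have hkq : (2 : ℚ) ^ k = P * Q := by
    have : (2 : ℚ) ^ k = (P * Q : ℕ) := by rw [← hk]; push_cast; rfl
    rw [this]; push_cast; rfl
  have hPq : (2 : ℚ) ^ i = P := by rw [hP]; push_cast; rfl
  have haQ : (a : ℚ) = Q * q + r := by exact_mod_cast har.symm
  rw [Int.floor_eq_iff, ← mul_div_assoc, le_div_iff₀ hden, div_lt_iff₀ hden, hPq, haQ, hkq]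
  have hqP : q + 1 ≤ P := by
    by_contra hc
    have : P ≤ q := by omega
    have : Q * P ≤ Q * q := Nat.mul_le_mul_left _ this
    rw [hk, mul_comm] at ha; omega
  have key : q + P * r + 1 < P * Q := by
    rcases Nat.lt_or_ge (r + 1) Q with h | h
    · nlinarith
    · have hrQ : r + 1 = Q := by omega
      have : q + 1 < P := by
        by_contra hc
        have hh : q + 1 = P := by omega
        have : a + 1 = P * Q := by rw [← hh, ← har]; nlinarith
        omega
      nlinarith
  have key' : (q : ℚ) + P * r + 1 < P * Q := by exact_mod_cast key
  have hq0 : (0 : ℚ) ≤ q := by positivity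
  have hPr : (0 : ℚ) ≤ P * r := by positivity
  push_cast
  constructor <;> nlinarith

lemma two_pow_sub_pos {k : ℕ} (hk : 0 < k) : (0 : ℚ) < (2 : ℚ) ^ k - 1 := by
  have : (1 : ℚ) < (2 : ℚ) ^ k := one_lt_pow₀ (by norm_num) (by omega)
  linarith

lemma fract_congr {x y : ℚ} (h : II (x - y)) : Int.fract x = Int.fract y := by
  obtain ⟨z, hz⟩ := h
  exact Int.fract_eq_fract.mpr ⟨z, hz⟩

lemma V_avg {V : ℚ → ℚ} (hV : IsV2 V) {x : ℚ} {k : ℕ} (hk : 0 < k)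
    (hx : II (((2 : ℚ) ^ k - 1) * x)) :
    (k : ℚ) * V x = ∑ i ∈ Finset.range k, Int.fract ((2 : ℚ) ^ i * x) := by
  have hd := two_pow_sub_pos hk
  have hx' : II (((2 : ℚ) ^ k - 1) * Int.fract x) := by
    have : ((2 : ℚ) ^ k - 1) * Int.fract x = ((2 : ℚ) ^ k - 1) * x +
      -(((2 : ℕ) ^ k : ℕ) * (⌊x⌋ : ℚ)) + ⌊x⌋ := by
      rw [Int.fract]; push_cast; ring
    rw [this]
    exact (hx.add (II.natmul _ ⟨_, rfl⟩).neg).add ⟨_, rfl⟩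
  obtain ⟨z, hz⟩ := hx'
  have hz0 : 0 ≤ z := by
    have : (0 : ℚ) ≤ z := by rw [← hz]; exact mul_nonneg hd.le (Int.fract_nonneg x)
    exact_mod_cast this
  obtain ⟨a, rfl⟩ := Int.eq_ofNat_of_zero_le hz0
  have hfa : Int.fract x = a / ((2 : ℚ) ^ k - 1) := by
    rw [eq_div_iff hd.ne']; push_cast at hz; linarith
  have ha : a < 2 ^ k - 1 := by
    have h1 := Int.fract_lt_one x
    rw [hfa, div_lt_one hd] at h1
    have : ((a + 1 : ℕ) : ℚ) < (2 ^ k : ℕ) := by push_cast; linarith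
    have : a + 1 < 2 ^ k := by exact_mod_cast this
    omega
  have hVx := hV x k a hk ha ⟨⌊x⌋, by rw [← hfa, Int.self_sub_fract]⟩
  have hk0 : (k : ℚ) ≠ 0 := by positivity
  rw [hVx, mul_div_cancel₀ _ hk0]
  have h1 : ∀ i ∈ Finset.range k, Int.fract ((2 : ℚ) ^ i * x)
      = (2 : ℚ) ^ i * (a / ((2 : ℚ) ^ k - 1)) - (a / 2 ^ (k - i) : ℕ) := by
    intro i hi
    have : Int.fract ((2 : ℚ) ^ i * x) = Int.fract ((2 : ℚ) ^ i * (a / ((2 : ℚ) ^ k - 1))) := by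
      apply fract_congr
      rw [← hfa, ← mul_sub, Int.self_sub_fract]
      have := II.natmul (2 ^ i) (x := (⌊x⌋ : ℚ)) ⟨_, rfl⟩
      push_cast at this; exact this
    rw [this, Int.fract, floor_rot k a i ha (Finset.mem_range.mp hi)]
    push_cast; rfl
  rw [Finset.sum_congr rfl h1, Finset.sum_sub_distrib, ← Finset.sum_mul, geom_sum_eq (by norm_num)]
  have h2 : ∑ i ∈ Finset.range k, ((a / 2 ^ (k - i) : ℕ) : ℚ)
      = ∑ j ∈ Finset.range k, ((a / 2 ^ (j + 1) : ℕ) : ℚ) := by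
    rw [← Finset.sum_range_reflect]
    apply Finset.sum_congr rfl
    intro i hi
    have := Finset.mem_range.mp hi
    congr 3; omega
  rw [h2]
  have h3 := digsum_formula k a (by omega)
  have h4 : (∑ j ∈ Finset.range k, ((a / 2 ^ (j + 1) : ℕ) : ℚ)) + ((Nat.digits 2 a).sum : ℚ) = a := by
    exact_mod_cast h3
  have h5 : ((2:ℚ)^k - 1) / (2 - 1) * (a / ((2 : ℚ) ^ k - 1)) = a := by
    field_simp; norm_num
  rw [h5]; linarith

lemma V_per {V : ℚ → ℚ} (hV : IsV2 V) {x y : ℚ} (hx : OD x) (h : II (x - y)) : V x = V y := by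
  obtain ⟨k, hk, hkx⟩ := hx.exk
  have hm : ∀ m : ℕ, II ((2 : ℚ) ^ m * (x - y)) := by
    intro m
    have := II.natmul (2 ^ m) h
    push_cast at this; exact this
  have hky : II (((2 : ℚ) ^ k - 1) * y) := by
    have : ((2 : ℚ) ^ k - 1) * y = ((2 : ℚ) ^ k - 1) * x + - ((2 : ℚ) ^ k * (x - y)) + (x - y) := by
      ring
    rw [this]; exact (hkx.add (hm k).neg).add h
  have h1 := V_avg hV hk hkx
  have h2 := V_avg hV hk hky
  have h3 : (k : ℚ) * V x = k * V y := by
    rw [h1, h2]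
    apply Finset.sum_congr rfl
    intro i _
    apply fract_congr
    rw [← mul_sub]; exact hm i
  have hk0 : (k : ℚ) ≠ 0 := by positivity
  exact mul_left_cancel₀ hk0 h3

lemma II.fract_neg {x : ℚ} (hx : ¬ II x) : Int.fract (-x) = 1 - Int.fract x := by
  apply Int.fract_neg
  intro h
  exact hx ⟨⌊x⌋, by rw [Int.fract] at h; linarith⟩

lemma nII_two_pow {x : ℚ} (ho : OD x) (hx : ¬ II x) (i : ℕ) : ¬ II ((2 : ℚ) ^ i * x) := by
  intro h
  obtain ⟨N, hN, h'⟩ := ho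
  apply hx
  refine II.coprime (a := N) (b := 2 ^ i) ?_ h' (by push_cast; exact h)
  exact (Nat.coprime_two_right.mpr hN).pow_right i

lemma V_neg {V : ℚ → ℚ} (hV : IsV2 V) {x : ℚ} (ho : OD x) (hx : ¬ II x) : V (-x) = 1 - V x := by
  obtain ⟨k, hk, hkx⟩ := ho.exk
  have h1 := V_avg hV hk hkx
  have h2 := V_avg hV (x := -x) hk (by simpa using hkx.neg)
  have hk0 : (k : ℚ) ≠ 0 := by positivity
  apply mul_left_cancel₀ hk0
  rw [h2, mul_sub, h1, mul_one]
  rw [Finset.sum_congr rfl (fun i _ => by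
    rw [mul_neg, II.fract_neg (nII_two_pow ho hx i)]), Finset.sum_sub_distrib]
  simp

lemma V_int {V : ℚ → ℚ} (hV : IsV2 V) {x : ℚ} (hx : II x) : V x = 0 := by
  obtain ⟨z, rfl⟩ := hx
  have := hV z 1 0 (by norm_num) (by norm_num) ⟨z, by simp⟩
  simpa using this

lemma V_half {V : ℚ → ℚ} (hV : IsV2 V) {x : ℚ} {a : ℕ} (ha : 0 < a)
    (h : II (((2 : ℚ) ^ a + 1) * x)) (hx : ¬ II x) : V x = 1 / 2 := by
  have ho : OD x := ⟨2 ^ a + 1, by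
    rw [Nat.odd_add_one, Nat.not_odd_iff_even]; exact (even_two.pow_of_ne_zero (by omega)), by
      push_cast; exact h⟩
  have hm : ∀ m : ℕ, II ((2 : ℚ) ^ m * (((2 : ℚ) ^ a + 1) * x)) := by
    intro m
    have := II.natmul (2 ^ m) h
    push_cast at this; exact this
  have h2 := V_avg hV (x := x) (k := a + a) (by omega) (by
    have : ((2 : ℚ) ^ (a + a) - 1) * x = (2 : ℚ) ^ a * (((2 : ℚ) ^ a + 1) * x)
        + -(((2 : ℚ) ^ a + 1) * x) := by ring
    rw [this]; exact (hm a).add h.neg)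
  rw [Finset.sum_range_add] at h2
  have : ∀ i ∈ Finset.range a, Int.fract ((2 : ℚ) ^ (a + i) * x)
      = 1 - Int.fract ((2 : ℚ) ^ i * x) := by
    intro i _
    rw [← II.fract_neg (nII_two_pow ho hx i)]
    apply fract_congr
    have : (2 : ℚ) ^ (a + i) * x - -((2 : ℚ) ^ i * x) = (2 : ℚ) ^ i * (((2 : ℚ) ^ a + 1) * x) := by
      ring
    rw [this]; exact hm i
  rw [Finset.sum_congr rfl this, Finset.sum_sub_distrib] at h2
  simp at h2
  have ha0 : (a : ℚ) ≠ 0 := by positivity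
  apply mul_left_cancel₀ ha0
  linarith

lemma per_mod {n : ℕ} {g : ℤ → ℚ} (hg : ∀ u v : ℤ, (n : ℤ) ∣ u - v → g u = g v) [NeZero n]
    (e : ZMod n ≃ ZMod n) (h : ℤ → ℤ) (he : ∀ b : ℤ, ((h b : ℤ) : ZMod n) = e (b : ZMod n)) :
    ∑ b ∈ Finset.range n, g (h b) = ∑ b ∈ Finset.range n, g b := by
  have key : ∀ G : ℤ → ℚ, 
      ∑ b ∈ Finset.range n, G b = ∑ z : ZMod n, G (z.val : ℤ) := by
    intro G
    refine Finset.sum_bij' (fun b _ => (b : ZMod n)) (fun z _ => z.val) ?_ ?_ ?_ ?_ ?_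
    · simp
    · intro z _; exact Finset.mem_range.mpr (ZMod.val_lt z)
    · intro b hb; exact ZMod.val_cast_of_lt (Finset.mem_range.mp hb)
    · intro z _; simp
    · intro b hb; rw [ZMod.val_cast_of_lt (Finset.mem_range.mp hb)]
  rw [key g, key (fun b => g (h b))]
  refine Finset.sum_equiv e (by simp) ?_
  intro z _
  apply hg
  rw [← ZMod.intCast_zmod_eq_zero_iff_dvd]
  push_cast
  rw [he]
  simp

lemma dvd_frac {n : ℕ} (hn : 0 < n) {u v : ℤ} (h : (n : ℤ) ∣ u - v) (x : ℚ) :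
    II (x + (u : ℚ) / n - (x + (v : ℚ) / n)) := by
  obtain ⟨c, hc⟩ := h
  refine ⟨c, ?_⟩
  have : (u : ℚ) - v = n * c := by exact_mod_cast hc
  have hn0 : (n : ℚ) ≠ 0 := by positivity
  have h2 : x + (u : ℚ) / n - (x + (v : ℚ) / n) = (u - v) / n := by ring
  rw [h2, this, mul_div_cancel_left₀ _ hn0]

/-- multiplication permutes -/
lemma perm_mul {n c : ℕ} (hn : 0 < n) (hc : Nat.Coprime c n) (f : ℚ → ℚ) (x : ℚ)
    (hf : ∀ u v : ℤ, (n : ℤ) ∣ u - v → f (x + (u : ℚ) / n) = f (x + (v : ℚ) / n)) :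
    ∑ b ∈ Finset.range n, f (x + c * ((b : ℚ) / n)) = ∑ b ∈ Finset.range n, f (x + (b : ℚ) / n) := by
  have : NeZero n := ⟨by omega⟩
  have := per_mod (n := n) (g := fun u : ℤ => f (x + (u : ℚ) / n)) hf
    (Units.mulLeft (ZMod.unitOfCoprime c hc)) (fun b => c * b) (by intro b; simp)
  simp only [Int.cast_mul, Int.cast_natCast] at this
  rw [← this]
  apply Finset.sum_congr rfl
  intro b _
  congr 2; ring

lemma hermite {n : ℕ} (hn : 0 < n) (x : ℚ) :
    ∑ b ∈ Finset.range n, (Int.fract (x + (b : ℚ) / n) - 1 / 2) = Int.fract (n * x) - 1 / 2 := by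
  have : NeZero n := ⟨by omega⟩
  have hn0 : (0 : ℚ) < n := by positivity
  set m := ⌊(n : ℚ) * x⌋
  set f := Int.fract ((n : ℚ) * x) with hf
  have hx : x = (f + m) / n := by
    rw [eq_div_iff hn0.ne', hf, Int.fract_add_floor]; ring
  have h1 := per_mod (n := n) (g := fun u : ℤ => Int.fract (f / n + (u : ℚ) / n) - 1 / 2)
    (by intro u v h; rw [fract_congr (dvd_frac hn h _)])
    (Equiv.addLeft (m : ZMod n)) (fun b => m + b) (by intro b; simp)
  simp only [Int.cast_add, Int.cast_natCast] at h1
  have h2 : ∀ b ∈ Finset.range n, Int.fract (x + (b : ℚ) / n) - 1 / 2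
      = Int.fract (f / n + ((m : ℚ) + b) / n) - 1 / 2 := by
    intro b _
    congr 2
    rw [hx]; ring
  rw [Finset.sum_congr rfl h2, h1]
  have h3 : ∀ b ∈ Finset.range n, Int.fract (f / n + (b : ℚ) / n) - 1 / 2 = (f / n - 1 / 2) + b / n := by
    intro b hb
    have hb' : (b : ℚ) + 1 ≤ n := by exact_mod_cast (Finset.mem_range.mp hb)
    have hf0 : 0 ≤ f := Int.fract_nonneg _
    have hf1 : f < 1 := Int.fract_lt_one _
    rw [← add_div, Int.fract_eq_self.mpr ⟨by positivity, by rw [div_lt_one hn0]; linarith⟩]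
    ring
  rw [Finset.sum_congr rfl h3, Finset.sum_add_distrib, ← Finset.sum_div]
  have h4 : (∑ b ∈ Finset.range n, (b : ℚ)) * 2 = n * (n - 1) := by
    have := Finset.sum_range_id_mul_two n
    have h : ((∑ b ∈ Finset.range n, b : ℕ) : ℚ) * 2 = n * ((n - 1 : ℕ) : ℚ) := by exact_mod_cast this
    rw [Nat.cast_sub hn] at h
    push_cast at h; exact h
  have h5 : (∑ b ∈ Finset.range n, (b : ℚ)) = n * (n - 1) / 2 := by linarith
  rw [h5]
  simp only [Finset.sum_const, Finset.card_range, nsmul_eq_mul]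
  field_simp
  ring

lemma V_dist {V : ℚ → ℚ} (hV : IsV2 V) {n : ℕ} (hn : Odd n) {x : ℚ} (hx : OD x) :
    ∑ b ∈ Finset.range n, (V (x + (b : ℚ) / n) - 1 / 2) = V (n * x) - 1 / 2 := by
  have hn0 : (n : ℚ) ≠ 0 := by have := hn.pos; positivity
  obtain ⟨N, hN, hNx⟩ := hx
  have hO : OD (1 / ((N * n : ℕ) : ℚ)) := OD.frac 1 ⟨1, by simp⟩ _ (hN.mul hn)
  obtain ⟨k, hk, z, hz⟩ := hO.exk
  have hN0 : (N : ℚ) ≠ 0 := by have := hN.pos; positivity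
  have hz' : (2 : ℚ) ^ k - 1 = z * (N * n) := by
    push_cast at hz; field_simp at hz; linarith
  have hk0 : (k : ℚ) ≠ 0 := by positivity
  have hA : ∀ b : ℕ, II (((2 : ℚ) ^ k - 1) * (x + (b : ℚ) / n)) := by
    intro b
    have : ((2 : ℚ) ^ k - 1) * (x + (b : ℚ) / n) = z * (n * (N * x) + N * b) := by
      rw [hz']; field_simp
    rw [this]
    exact II.mul ⟨z, rfl⟩ ((hNx.natmul n).add ((II.nat N).mul (II.nat b)))
  have hB : II (((2 : ℚ) ^ k - 1) * (n * x)) := by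
    have : ((2 : ℚ) ^ k - 1) * (n * x) = z * (n * (n * (N * x))) := by
      rw [hz']; ring
    rw [this]
    exact II.mul ⟨z, rfl⟩ ((hNx.natmul n).natmul n)
  apply mul_left_cancel₀ hk0
  rw [Finset.mul_sum, mul_sub, V_avg hV hk hB]
  have h1 : ∀ b ∈ Finset.range n, (k : ℚ) * (V (x + (b : ℚ) / n) - 1 / 2)
      = ∑ i ∈ Finset.range k, (Int.fract ((2 : ℚ) ^ i * x + (2 ^ i : ℕ) * ((b : ℚ) / n)) - 1 / 2) := by
    intro b _
    rw [mul_sub, V_avg hV hk (hA b), Finset.sum_sub_distrib]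
    simp [mul_add]
  rw [Finset.sum_congr rfl h1, Finset.sum_comm]
  have h2 : ∀ i ∈ Finset.range k, ∑ b ∈ Finset.range n,
      (Int.fract ((2 : ℚ) ^ i * x + (2 ^ i : ℕ) * ((b : ℚ) / n)) - 1 / 2)
      = Int.fract ((2 : ℚ) ^ i * (n * x)) - 1 / 2 := by
    intro i _
    rw [perm_mul hn.pos ((Nat.coprime_two_left.mpr hn).pow_left i) (fun y => Int.fract y - 1 / 2)
      ((2 : ℚ) ^ i * x) (by intro u v h; rw [fract_congr (dvd_frac hn.pos h _)]),
      hermite hn.pos]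
    congr 2; ring
  rw [Finset.sum_congr rfl h2, Finset.sum_sub_distrib]
  simp

/-- iterated difference -/
def GG (V : ℚ → ℚ) {ι : Type} (n : ι → ℕ) (s : Finset ι) (x : ℚ) : ℚ :=
  ∑ S ∈ s.powerset, (-1 : ℚ) ^ (s.card + S.card) * (V (((∏ j ∈ S, n j : ℕ) : ℚ) * x) - 1 / 2)

lemma GG_insert (V : ℚ → ℚ) {ι : Type} [DecidableEq ι] (n : ι → ℕ) (s : Finset ι) (m : ι) (hm : m ∉ s)
    (x : ℚ) : GG V n (insert m s) x = GG V n s (n m * x) - GG V n s x := by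
  unfold GG
  rw [Finset.sum_powerset_insert hm, add_comm, sub_eq_add_neg, ← Finset.sum_neg_distrib]
  congr 1
  · apply Finset.sum_congr rfl
    intro S hS
    have hmS : m ∉ S := fun h => hm (Finset.mem_powerset.mp hS h)
    rw [Finset.card_insert_of_notMem hm, Finset.card_insert_of_notMem hmS, Finset.prod_insert hmS]
    have : s.card + 1 + (S.card + 1) = s.card + S.card + 2 := by ring
    rw [this, pow_add]
    push_cast
    have h2 : (n m : ℚ) * (∏ j ∈ S, (n j : ℚ)) * x = (∏ j ∈ S, (n j : ℚ)) * (n m * x) := by ring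
    rw [h2]; ring
  · apply Finset.sum_congr rfl
    intro S hS
    rw [Finset.card_insert_of_notMem hm]
    ring

lemma GG_dist {V : ℚ → ℚ} (hV : IsV2 V) {ι : Type} (n : ι → ℕ) (s : Finset ι) {N : ℕ}
    (hN : Odd N) (hc : ∀ j ∈ s, Nat.Coprime (n j) N) {x : ℚ} (hx : OD x) :
    ∑ b ∈ Finset.range N, GG V n s (x + (b : ℚ) / N) = GG V n s (N * x) := by
  unfold GG
  rw [Finset.sum_comm]
  apply Finset.sum_congr rfl
  intro S hS
  rw [← Finset.mul_sum]
  congr 1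
  set c := ∏ j ∈ S, n j
  have hcN : Nat.Coprime c N := Nat.Coprime.prod_left (fun j hj => hc j (Finset.mem_powerset.mp hS hj))
  simp only [mul_add]
  rw [perm_mul hN.pos hcN (fun y => V y - 1 / 2) (c * x), V_dist hV hN (hx.natmul c)]
  · congr 2; ring
  · intro u v h
    rw [V_per hV _ (dvd_frac hN.pos h _)]
    exact (hx.natmul c).add (OD.frac _ ⟨u, rfl⟩ N hN)

lemma GG_per {V : ℚ → ℚ} (hV : IsV2 V) {ι : Type} (n : ι → ℕ) (s : Finset ι) {x y : ℚ}
    (hx : OD x) (h : II (x - y)) : GG V n s x = GG V n s y := by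
  unfold GG
  apply Finset.sum_congr rfl
  intro S _
  rw [V_per hV (hx.natmul _) (y := ((∏ j ∈ S, n j : ℕ) : ℚ) * y)]
  rw [← mul_sub]; exact h.natmul _

def Gen {ι : Type} [DecidableEq ι] (n : ι → ℕ) (s : Finset ι) (x : ℚ) : Prop :=
  II (((∏ j ∈ s, n j : ℕ) : ℚ) * x) ∧ ∀ i ∈ s, ¬ II (((∏ j ∈ s.erase i, n j : ℕ) : ℚ) * x)

lemma Gen.od {ι : Type} [DecidableEq ι] {n : ι → ℕ} {s : Finset ι} (hn : ∀ j, Odd (n j)) {x : ℚ}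
    (h : Gen n s x) : OD x :=
  ⟨_, Finset.prod_induction _ Odd (fun _ _ => Odd.mul) odd_one (fun j _ => hn j), h.1⟩

lemma Gen.neg {ι : Type} [DecidableEq ι] {n : ι → ℕ} {s : Finset ι} {x : ℚ}
    (h : Gen n s x) : Gen n s (-x) := by
  refine ⟨by simpa using h.1.neg, fun i hi h' => h.2 i hi (by simpa using h'.neg)⟩

lemma Gen.mul {ι : Type} [DecidableEq ι] {n : ι → ℕ} {s : Finset ι} {x : ℚ}
    (h : Gen n s x) {N : ℕ} (hc : ∀ j ∈ s, Nat.Coprime (n j) N) : Gen n s (N * x) := by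
  refine ⟨?_, fun i hi h' => h.2 i hi ?_⟩
  · have := h.1.natmul N
    rwa [mul_left_comm] at this
  · refine II.coprime (hc i hi) ?_ (by rwa [mul_left_comm] at h')
    rw [← mul_assoc, ← Nat.cast_mul, Finset.mul_prod_erase s n hi]
    exact h.1

lemma Gen.insert {ι : Type} [DecidableEq ι] {n : ι → ℕ} {s : Finset ι} {x : ℚ}
    (h : Gen n s x) {m : ι} (hm : m ∉ s) (hc : ∀ j ∈ s, Nat.Coprime (n j) (n m)) {b : ℕ}
    (hb : 0 < b) (hbn : b < n m) : Gen n (insert m s) (x + (b : ℚ) / n m) := by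
  have hm0 : (n m : ℚ) ≠ 0 := by have : 0 < n m := by omega
                                 positivity
  refine ⟨?_, ?_⟩
  · rw [Finset.prod_insert hm]
    have : ((n m * ∏ j ∈ s, n j : ℕ) : ℚ) * (x + (b : ℚ) / n m)
      = n m * (((∏ j ∈ s, n j : ℕ) : ℚ) * x) + ((∏ j ∈ s, n j : ℕ) : ℚ) * b := by
      rw [Nat.cast_mul]; field_simp
    rw [this]
    exact (h.1.natmul _).add ((II.nat _).natmul _)
  · intro i hi
    rcases Finset.mem_insert.mp hi with rfl | his
    · rw [Finset.erase_insert hm, mul_add, add_comm, II.add_iff h.1]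
      intro h'
      have hcp : Nat.Coprime (∏ j ∈ s, n j) (n i) := Nat.Coprime.prod_left hc
      have h2 : II ((b : ℚ) / n i) := by
        refine II.coprime hcp h' ?_
        rw [mul_div_cancel₀ _ hm0]; exact II.nat b
      obtain ⟨z, hz⟩ := h2
      rw [div_eq_iff hm0] at hz
      have hz' : (b : ℤ) = z * n i := by exact_mod_cast hz
      have : (n i : ℤ) ∣ b := ⟨z, by rw [hz']; ring⟩
      have := Nat.le_of_dvd hb (by exact_mod_cast this)
      omega
    · have hne : m ≠ i := fun h => hm (h ▸ his)
      rw [Finset.erase_insert_of_ne hne, Finset.prod_insert (by simp [hm])]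
      have : ((n m * ∏ j ∈ s.erase i, n j : ℕ) : ℚ) * (x + (b : ℚ) / n m)
        = ((∏ j ∈ s.erase i, n j : ℕ) : ℚ) * (n m * x) + ((∏ j ∈ s.erase i, n j : ℕ) : ℚ) * b := by
        rw [Nat.cast_mul]; field_simp
      rw [this, II.add_iff ((II.nat _).natmul _)]
      exact (h.mul hc).2 i his

lemma step {V : ℚ → ℚ} (hV : IsV2 V) {ι : Type} [DecidableEq ι] {n : ι → ℕ} {s : Finset ι}
    (hn : ∀ j, Odd (n j)) {m : ι} (hm : m ∉ s) (hc : ∀ j ∈ s, Nat.Coprime (n j) (n m))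
    (h4 : 4 ≤ n m) (h : ∃ y, Gen n s y ∧ GG V n s y ≠ -(1 / 2)) :
    ∃ y, Gen n (insert m s) y ∧ GG V n (insert m s) y ≠ -(1 / 2) := by
  by_contra hcon
  push Not at hcon
  obtain ⟨y, hy, hyG⟩ := h
  have key : ∀ y, Gen n s y → GG V n s y + 1 / 2
      = (-((n m : ℚ) - 2)) * (GG V n s (n m * y) + 1 / 2) := by
    intro y hy
    have h1 := GG_dist hV n s (hn m) hc (hy.od hn)
    obtain ⟨N, hN⟩ : ∃ N, n m = N + 1 := ⟨n m - 1, by omega⟩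
    have h2 : ∀ b ∈ Finset.range N, GG V n s (y + ((b + 1 : ℕ) : ℚ) / n m)
        = GG V n s (n m * y) + 1 / 2 := by
      intro b hb
      have hb' := Finset.mem_range.mp hb
      have h3 := hcon _ (hy.insert hm hc (b := b + 1) (by omega) (by omega))
      rw [GG_insert V n s m hm] at h3
      have h4 : GG V n s (n m * (y + ((b + 1 : ℕ) : ℚ) / n m)) = GG V n s (n m * y) := by
        have hm0 : (n m : ℚ) ≠ 0 := by have : 0 < n m := by omega
                                       positivity
        symm
        apply GG_per hV n s ((hy.od hn).natmul _)
        have : (n m : ℚ) * y - n m * (y + ((b + 1 : ℕ) : ℚ) / n m) = -((b + 1 : ℕ) : ℚ) := by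
          field_simp; ring
        rw [this]
        exact (II.nat _).neg
      rw [h4] at h3
      linarith
    have h5 : ∑ b ∈ Finset.range (n m), GG V n s (y + (b : ℚ) / n m)
       = ∑ b ∈ Finset.range N, GG V n s (y + ((b + 1 : ℕ) : ℚ) / n m)
         + GG V n s (y + ((0 : ℕ) : ℚ) / n m) := by
      conv_lhs => rw [show Finset.range (n m) = Finset.range (N + 1) by rw [hN]]
      exact Finset.sum_range_succ' (fun b : ℕ => GG V n s (y + (b : ℚ) / n m)) N
    rw [h5, Finset.sum_congr rfl h2] at h1
    simp only [Finset.sum_const, Finset.card_range, nsmul_eq_mul, Nat.cast_zero, zero_div,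
      add_zero] at h1
    have hNq : (n m : ℚ) = N + 1 := by exact_mod_cast hN
    have hNq' : (N : ℚ) = n m - 1 := by linarith
    rw [hNq'] at h1
    linear_combination h1
  have iter : ∀ k : ℕ, Gen n s (((n m ^ k : ℕ) : ℚ) * y) ∧ GG V n s y + 1 / 2
      = (-((n m : ℚ) - 2)) ^ k * (GG V n s (((n m ^ k : ℕ) : ℚ) * y) + 1 / 2) := by
    intro k
    induction k with
    | zero => simpa using hy
    | succ k ih =>
      have h1 : ((n m ^ (k + 1) : ℕ) : ℚ) * y = n m * (((n m ^ k : ℕ) : ℚ) * y) := by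
        push_cast; ring
      rw [h1]
      refine ⟨ih.1.mul hc, ?_⟩
      rw [ih.2, key _ ih.1]
      ring
  set P := ∏ j ∈ s, n j with hP
  have hPodd : Odd P := Finset.prod_induction _ Odd (fun _ _ => Odd.mul) odd_one (fun j _ => hn j)
  have hcp : Nat.Coprime (n m) P := (Nat.Coprime.prod_left hc).symm
  obtain ⟨hg, hk⟩ := iter P.totient
  have hper : GG V n s (((n m ^ P.totient : ℕ) : ℚ) * y) = GG V n s y := by
    apply GG_per hV n s (hg.od hn)
    have h1 : n m ^ P.totient ≡ 1 [MOD P] := Nat.ModEq.pow_totient hcp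
    have h2 : P ∣ n m ^ P.totient - 1 :=
      (Nat.modEq_iff_dvd' (Nat.one_le_pow _ _ (by omega))).mp h1.symm
    obtain ⟨c, hc'⟩ := h2
    have h3 : n m ^ P.totient = P * c + 1 := by
      have := Nat.one_le_pow P.totient (n m) (by omega); omega
    have : ((n m ^ P.totient : ℕ) : ℚ) * y - y = c * (P * y) := by
      rw [h3]; push_cast; ring
    rw [this]
    exact hy.1.natmul c
  rw [hper] at hk
  have hne : GG V n s y + 1 / 2 ≠ 0 := fun h => hyG (by linarith)
  have h1 : (-((n m : ℚ) - 2)) ^ P.totient = 1 := by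
    have : (-((n m : ℚ) - 2)) ^ P.totient * (GG V n s y + 1 / 2) = 1 * (GG V n s y + 1 / 2) := by
      rw [one_mul]; exact hk.symm
    exact mul_right_cancel₀ hne this
  have h2 : |(-((n m : ℚ) - 2))| ^ P.totient = 1 := by rw [← abs_pow, h1, abs_one]
  have h4q : (4 : ℚ) ≤ n m := by exact_mod_cast h4
  rw [abs_neg, abs_of_nonneg (by linarith)] at h2
  have : 1 < ((n m : ℚ) - 2) ^ P.totient :=
    one_lt_pow₀ (by linarith) (Nat.totient_pos.mpr hPodd.pos).ne'
  linarith

lemma ds_append (m : ℕ) : ∀ q r : ℕ, r < 2 ^ m →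
    (Nat.digits 2 (q * 2 ^ m + r)).sum = (Nat.digits 2 q).sum + (Nat.digits 2 r).sum := by
  have hds : ∀ a : ℕ, (Nat.digits 2 a).sum = a % 2 + (Nat.digits 2 (a / 2)).sum := by
    intro a
    rcases Nat.eq_zero_or_pos a with rfl | h
    · simp
    · rw [Nat.digits_def' (by norm_num) h, List.sum_cons]
  induction m with
  | zero => intro q r hr; have : r = 0 := by simpa using hr
            subst this; simp
  | succ m ih =>
    intro q r hr
    have hr' : r / 2 < 2 ^ m := by rw [pow_succ] at hr; omega
    have e1 : q * 2 ^ (m + 1) + r = 2 * (q * 2 ^ m) + r := by ring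
    have e2 : (2 * (q * 2 ^ m) + r) / 2 = q * 2 ^ m + r / 2 := by omega
    have e3 : (2 * (q * 2 ^ m) + r) % 2 = r % 2 := by omega
    rw [e1, hds, e2, e3, ih _ _ hr', hds r]
    ring

lemma ds_ones (a : ℕ) : (Nat.digits 2 (2 ^ a - 1)).sum = a := by
  induction a with
  | zero => simp
  | succ a ih =>
    have h1 := @Nat.one_le_two_pow a
    have : 2 ^ (a + 1) - 1 = (2 ^ a - 1) * 2 ^ 1 + 1 := by rw [pow_succ]; omega
    rw [this, ds_append 1 _ 1 (by norm_num), ih]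
    simp

lemma exM (a c : ℕ) : ∃ M : ℕ, M * (2 ^ a + 1) + 1 = 2 ^ (2 * a * c) ∧
    (Nat.digits 2 M).sum = a * c := by
  induction c with
  | zero => exact ⟨0, by simp⟩
  | succ c ih =>
    obtain ⟨M, h1, h2⟩ := ih
    have hle : 2 ^ a - 1 < 2 ^ (2 * a) := by
      have : 2 ^ a ≤ 2 ^ (2 * a) := Nat.pow_le_pow_right (by norm_num) (by omega)
      have := @Nat.one_le_two_pow a
      omega
    refine ⟨M * 2 ^ (2 * a) + (2 ^ a - 1), ?_, ?_⟩
    · obtain ⟨y, hy⟩ : ∃ y, 2 ^ a = y + 1 := ⟨2 ^ a - 1, by have := @Nat.one_le_two_pow a; omega⟩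
      have e : 2 ^ (2 * a * (c + 1)) = 2 ^ (2 * a * c) * (2 ^ a * 2 ^ a) := by
        rw [← pow_add, ← pow_add]; congr 1; ring
      have e2 : 2 ^ (2 * a) = 2 ^ a * 2 ^ a := by rw [← pow_add]; congr 1; ring
      rw [e, ← h1, e2, hy]
      simp only [Nat.add_sub_cancel]
      ring
    · rw [ds_append _ _ _ hle, h2, ds_ones]; ring

lemma nII_one_div {u v : ℕ} (hv : 1 < v) (hc : Nat.Coprime u v) : ¬ II ((u : ℚ) * (1 / v)) := by
  rintro ⟨z, hz⟩
  have hv0 : (v : ℚ) ≠ 0 := by have : 0 < v := by omega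
                               positivity
  field_simp at hz
  have hz' : (u : ℤ) = v * z := by exact_mod_cast hz
  have : (v : ℤ) ∣ u := ⟨z, hz'⟩
  have h2 : v ∣ u := by exact_mod_cast this
  have := Nat.Coprime.eq_one_of_dvd hc.symm h2
  omega

lemma base_aux {V : ℚ → ℚ} (hV : IsV2 V) (e f u w : ℕ) (hu : Odd u) (hw : Odd w) (hef : e < f)
    (hc : Nat.Coprime (2 ^ (2 ^ e * u) + 1) (2 ^ (2 ^ f * w) + 1)) :
    ∃ x, V x = 1 / 4 ∧
      II (((2 ^ (2 ^ e * u) + 1 : ℕ) : ℚ) * (((2 ^ (2 ^ f * w) + 1 : ℕ) : ℚ) * x)) ∧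
      ¬ II (((2 ^ (2 ^ e * u) + 1 : ℕ) : ℚ) * x) ∧ ¬ II (((2 ^ (2 ^ f * w) + 1 : ℕ) : ℚ) * x) := by
  have d1 : 2 ^ (2 ^ e) + 1 ∣ 2 ^ (2 ^ e * u) + 1 := by
    rw [pow_mul]; simpa using hu.nat_add_dvd_pow_add_pow (2 ^ 2 ^ e) 1
  have d2 : 2 ^ (2 ^ f) + 1 ∣ 2 ^ (2 ^ f * w) + 1 := by
    rw [pow_mul]; simpa using hw.nat_add_dvd_pow_add_pow (2 ^ 2 ^ f) 1
  obtain ⟨c, hcf⟩ : ∃ c, 2 ^ f = 2 * 2 ^ e * c :=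
    ⟨2 ^ (f - e - 1), by rw [← pow_succ', ← pow_add]; congr 1; omega⟩
  generalize 2 ^ (2 ^ e * u) + 1 = n1 at *
  generalize 2 ^ (2 ^ f * w) + 1 = n2 at *
  have hβ : 0 < 2 ^ f := by positivity
  have hα : 0 < 2 ^ e := by positivity
  generalize 2 ^ e = α at *
  generalize 2 ^ f = β at *
  obtain ⟨M, hM, hds⟩ := exM α c
  rw [← hcf] at hM
  have g1 : 1 < 2 ^ α + 1 := by have := @Nat.one_le_two_pow α; omega
  have g2 : 1 < 2 ^ β + 1 := by have := @Nat.one_le_two_pow β; omega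
  have hMq : (M : ℚ) * (2 ^ α + 1) + 1 = 2 ^ β := by exact_mod_cast hM
  generalize hp : 2 ^ α + 1 = p at *
  generalize hq : 2 ^ β + 1 = q at *
  have hp' : (2 : ℚ) ^ α + 1 = p := by exact_mod_cast hp
  have hq' : (2 : ℚ) ^ β + 1 = q := by exact_mod_cast hq
  have hp0 : (p : ℚ) ≠ 0 := by have : 0 < p := by omega
                               positivity
  have hq0 : (q : ℚ) ≠ 0 := by have : 0 < q := by omega
                               positivity
  obtain ⟨r1, rfl⟩ := d1
  obtain ⟨r2, rfl⟩ := d2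
  refine ⟨1 / ((p : ℚ) * q), ?_, ?_, ?_, ?_⟩
  · have hb := two_pow_sub_pos hβ
    rw [hV _ (2 * β) M (by omega) ?_ ⟨0, ?_⟩, hds]
    · have : (β : ℚ) = 2 * α * c := by exact_mod_cast hcf
      have hβ0 : (β : ℚ) ≠ 0 := by positivity
      push_cast
      rw [div_eq_div_iff (by positivity) (by norm_num), this]; ring
    · have h1 : M + 1 ≤ 2 ^ β := by rw [← hM]; nlinarith
      have h2 : 2 ^ β < 2 ^ (2 * β) := Nat.pow_lt_pow_right (by norm_num) (by omega)
      omega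
    · have hb2 : (2 : ℚ) ^ (2 * β) - 1 = (2 ^ β - 1) * q := by rw [← hq']; ring
      have hM' : (2 : ℚ) ^ β - 1 = M * p := by rw [← hp']; linarith
      have hM0 : (M : ℚ) ≠ 0 := by
        intro h; rw [h, zero_mul] at hM'; linarith
      rw [hb2, hM']; field_simp; simp
  · have : ((p * r1 : ℕ) : ℚ) * (((q * r2 : ℕ) : ℚ) * (1 / ((p : ℚ) * q))) = r1 * r2 := by
      push_cast; field_simp
    rw [this]; exact (II.nat _).mul (II.nat _)
  · have : ((p * r1 : ℕ) : ℚ) * (1 / ((p : ℚ) * q)) = r1 * (1 / q) := by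
      push_cast; field_simp
    rw [this]
    exact nII_one_div g2 ((Nat.Coprime.coprime_mul_left hc).coprime_mul_right_right)
  · have : ((q * r2 : ℕ) : ℚ) * (1 / ((p : ℚ) * q)) = r2 * (1 / p) := by
      push_cast; field_simp
    rw [this]
    exact nII_one_div g1 ((Nat.Coprime.coprime_mul_right hc).coprime_mul_left_right).symm

lemma base {V : ℚ → ℚ} (hV : IsV2 V) (A B : ℕ) (hA : 0 < A) (hB : 0 < B)
    (hc : Nat.Coprime (2 ^ A + 1) (2 ^ B + 1)) :
    ∃ x, V x = 1 / 4 ∧ II (((2 ^ A + 1 : ℕ) : ℚ) * (((2 ^ B + 1 : ℕ) : ℚ) * x)) ∧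
      ¬ II (((2 ^ A + 1 : ℕ) : ℚ) * x) ∧ ¬ II (((2 ^ B + 1 : ℕ) : ℚ) * x) := by
  obtain ⟨e, u, hu, rfl⟩ := Nat.exists_eq_two_pow_mul_odd hA.ne'
  obtain ⟨f, w, hw, rfl⟩ := Nat.exists_eq_two_pow_mul_odd hB.ne'
  rcases lt_trichotomy e f with h | h | h
  · exact base_aux hV e f u w hu hw h hc
  · exfalso
    subst h
    have d1 : 2 ^ (2 ^ e) + 1 ∣ 2 ^ (2 ^ e * u) + 1 := by
      rw [pow_mul]; simpa using hu.nat_add_dvd_pow_add_pow (2 ^ 2 ^ e) 1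
    have d2 : 2 ^ (2 ^ e) + 1 ∣ 2 ^ (2 ^ e * w) + 1 := by
      rw [pow_mul]; simpa using hw.nat_add_dvd_pow_add_pow (2 ^ 2 ^ e) 1
    have := Nat.eq_one_of_dvd_coprimes hc d1 d2
    have := @Nat.one_le_two_pow (2 ^ e)
    omega
  · obtain ⟨x, h1, h2, h3, h4⟩ := base_aux hV f e w u hw hu h hc.symm
    exact ⟨x, h1, by rwa [mul_left_comm], h4, h3⟩

lemma GG_reflect {V : ℚ → ℚ} (hV : IsV2 V) {ι : Type} [DecidableEq ι] {n : ι → ℕ} {s : Finset ι}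
    (hn : ∀ j, Odd (n j)) {x : ℚ} (h : Gen n s x) : GG V n s (-x) + GG V n s x = -1 := by
  unfold GG
  rw [← Finset.sum_add_distrib, Finset.sum_eq_single s]
  · have h1 := V_int hV h.1
    have h2 := V_int hV h.neg.1
    rw [h1, h2, show s.card + s.card = 2 * s.card by ring, pow_mul]; norm_num
  · intro S hS hne
    have hSs := Finset.mem_powerset.mp hS
    obtain ⟨i, his, hiS⟩ : ∃ i ∈ s, i ∉ S := by
      by_contra hcon
      push Not at hcon
      exact hne (Finset.Subset.antisymm hSs hcon)
    have hnI : ¬ II (((∏ j ∈ S, n j : ℕ) : ℚ) * x) := by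
      intro h'
      apply h.2 i his
      have hsub : S ⊆ s.erase i := fun j hj => Finset.mem_erase.mpr ⟨fun e => hiS (e ▸ hj), hSs hj⟩
      obtain ⟨c, hc⟩ := Finset.prod_dvd_prod_of_subset S (s.erase i) n hsub
      rw [hc]
      have : ((((∏ j ∈ S, n j) * c : ℕ)) : ℚ) * x = c * (((∏ j ∈ S, n j : ℕ) : ℚ) * x) := by
        push_cast; ring
      rw [this]; exact h'.natmul c
    have := V_neg hV ((h.od hn).natmul _) hnI
    rw [mul_neg, this]; ring
  · intro h'; exact absurd (Finset.mem_powerset_self s) h'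

lemma Vmulti_eq (V : ℚ → ℚ) {t : ℕ} (ht : 0 < t) (a : Fin t → ℕ) (x : ℚ) :
    Vmulti V a x = GG V (fun j => 2 ^ a j + 1) Finset.univ x := by
  unfold Vmulti GG
  rw [Finset.powerset_univ]
  have hs : ∀ S : Finset (Fin t), (-1 : ℚ) ^ (t - S.card) = (-1) ^ (t + S.card) := by
    intro S
    have hle : S.card ≤ t := by simpa using S.card_le_univ
    have : t + S.card = (t - S.card) + 2 * S.card := by omega
    rw [this, pow_add, pow_mul]; norm_num
  have h0 : ∑ S : Finset (Fin t), (-1 : ℚ) ^ (t + S.card) * (1 / 2) = 0 := by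
    have := Finset.sum_powerset_neg_one_pow_card_of_nonempty
      (x := (Finset.univ : Finset (Fin t))) ⟨⟨0, ht⟩, Finset.mem_univ _⟩
    rw [Finset.powerset_univ] at this
    have h2 : ∑ S : Finset (Fin t), (-1 : ℚ) ^ S.card = 0 := by exact_mod_cast this
    simp only [pow_add]
    rw [← Finset.sum_mul, ← Finset.mul_sum, h2]; simp
  simp only [mul_sub, Finset.sum_sub_distrib, Finset.card_univ, Fintype.card_fin]
  rw [h0, sub_zero]
  apply Finset.sum_congr rfl
  intro S _
  rw [hs]; push_cast; rfl

/-- For `t ≥ 3` and positive integers `a₁ > a₂ > ⋯ > a_t` with `2^{a_j}+1` pairwise coprime,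
there is a rational `x` with odd denominator such that `V(2; a₁, …, a_t; x) < -1/2`. -/
theorem stmt_11 (V : ℚ → ℚ) (hV : IsV2 V) (t : ℕ) (ht : 3 ≤ t)
    (a : Fin t → ℕ) (hpos : ∀ j, 0 < a j) (hanti : StrictAnti a)
    (hcop : ∀ j k, j ≠ k → Nat.Coprime (2 ^ a j + 1) (2 ^ a k + 1)) :
    ∃ x : ℚ, Odd x.den ∧ Vmulti V a x < -(1 / 2) := by
  set n : Fin t → ℕ := fun j => 2 ^ a j + 1 with hndef
  have hn : ∀ j, Odd (n j) := by
    intro j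
    rw [hndef]; simp only
    rw [Nat.odd_add_one, Nat.not_odd_iff_even]
    exact even_two.pow_of_ne_zero (hpos j).ne'
  let p : Fin t := ⟨t - 1, by omega⟩
  let q : Fin t := ⟨t - 2, by omega⟩
  have hpq : p ≠ q := by intro h; have := congrArg Fin.val h; simp only [p, q] at this; omega
  have hbase : ∃ y, Gen n {p, q} y ∧ GG V n {p, q} y ≠ -(1 / 2) := by
    obtain ⟨x, h1, h2, h3, h4⟩ := base hV (a p) (a q) (hpos p) (hpos q) (hcop p q hpq)
    refine ⟨x, ⟨?_, ?_⟩, ?_⟩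
    · rw [Finset.prod_pair hpq, Nat.cast_mul, mul_assoc]; exact h2
    · intro i hi
      rcases Finset.mem_insert.mp hi with rfl | hi
      · rw [Finset.erase_insert (by simpa using hpq), Finset.prod_singleton]; exact h4
      · rw [Finset.mem_singleton.mp hi, Finset.pair_comm, Finset.erase_insert (by simpa using hpq.symm),
          Finset.prod_singleton]; exact h3
    · have hG0 : ∀ y, GG V n {q} y = V (n q * y) - V y := by
        intro y
        have h0 : ∀ z, GG V n ∅ z = V z - 1 / 2 := by intro z; simp [GG]
        have := GG_insert V n ∅ q (by simp) y
        rw [h0, h0] at this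
        simp only [insert_empty_eq] at this
        rw [this]; ring
      rw [GG_insert V n {q} p (by simpa using hpq), hG0, hG0]
      have e1 : V (n q * (n p * x)) = 0 := V_int hV (by rw [mul_left_comm]; exact h2)
      have e2 : V (n p * x) = 1 / 2 := by
        refine V_half hV (hpos q) ?_ h3
        have := h2
        rw [mul_left_comm] at this
        simpa [hndef] using this
      have e3 : V (n q * x) = 1 / 2 := by
        refine V_half hV (hpos p) ?_ h4
        simpa [hndef] using h2
      rw [e1, e2, e3, h1]; norm_num
  have hind : ∀ r : Finset (Fin t), p ∉ r → q ∉ r →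
      ∃ y, Gen n (r ∪ {p, q}) y ∧ GG V n (r ∪ {p, q}) y ≠ -(1 / 2) := by
    intro r
    induction r using Finset.induction_on with
    | empty => intro _ _; simpa using hbase
    | insert m r hm ih =>
      intro hp hq
      simp only [Finset.mem_insert, not_or] at hp hq
      have hm' : m ∉ r ∪ {p, q} := by
        simp only [Finset.mem_union, Finset.mem_insert, Finset.mem_singleton, not_or]
        exact ⟨hm, fun h => hp.1 h.symm, fun h => hq.1 h.symm⟩
      rw [Finset.insert_union]
      refine step hV hn hm' ?_ ?_ (ih hp.2 hq.2)
      · intro j hj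
        exact hcop j m (fun h => hm' (h ▸ hj))
      · have hlt : m < p := by
          have h1 : m.val ≠ t - 1 := fun h => hp.1 (Fin.ext h.symm)
          have := m.isLt
          rw [Fin.lt_def]; simp only [p]; omega
        have h2 := hanti hlt
        have h3 := hpos p
        have : 2 ^ 2 ≤ 2 ^ a m := Nat.pow_le_pow_right (by norm_num) (by omega)
        simp only [hndef]; omega
  obtain ⟨y, hy, hyG⟩ := hind (Finset.univ \ {p, q}) (by simp) (by simp)
  have hu : (Finset.univ \ {p, q}) ∪ {p, q} = (Finset.univ : Finset (Fin t)) := by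
    ext j; simp
    tauto
  rw [hu] at hy hyG
  have hr := GG_reflect hV hn hy
  rcases lt_or_gt_of_ne hyG with h | h
  · exact ⟨y, (hy.od hn).den, by rw [Vmulti_eq V (by omega)]; exact h⟩
  · exact ⟨-y, (hy.neg.od hn).den, by rw [Vmulti_eq V (by omega)]; linarith⟩
end

section
/- Let t ≥ 2 and let a_1 > a_2 > ⋯ > a_t be positive integers such that the numbers 2^{a_1}+1, …, 2^{a_t}+1 are pairwise coprime. Then lcm(a_2, …, a_t) < 2^{a_1}. -/
def Bd (N B : ℕ) : Prop := ∀ P : ℕ → Prop, (∀ x, P x → 0 < x ∧ x ≤ N) →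
  (∀ e u v, Odd u → Odd v → P (2 ^ e * u) → P (2 ^ e * v) → u = v) →
  ∃ L, 0 < L ∧ L ≤ B ∧ ∀ x, P x → x ∣ L

theorem Bd_step (K N M B : ℕ) (hK : K = N / 2) (hB : Bd K B) (hM : 1 ≤ M)
    (hodd : ∀ m, Odd m → m ≤ N → m ≤ M) : Bd N (2 * M * B) := by
  intro P hP hd
  obtain ⟨L, hL0, hLB, hL⟩ := hB (fun y => P (2 * y))
    (fun x hx => by have := hP _ hx; omega)
    (fun e u v hu hv h1 h2 => hd (e + 1) u v hu hv
      (by rw [pow_succ']; simpa [mul_assoc] using h1)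
      (by rw [pow_succ']; simpa [mul_assoc] using h2))
  have key : ∃ m, 1 ≤ m ∧ m ≤ M ∧ ∀ x, P x → Odd x → x ∣ m := by
    by_cases h : ∃ m, P m ∧ Odd m
    · obtain ⟨m, hm, ho⟩ := h
      refine ⟨m, (hP m hm).1, hodd m ho (hP m hm).2, fun x hx hxo => ?_⟩
      rw [hd 0 x m hxo ho (by simpa using hx) (by simpa using hm)]
    · push Not at h
      refine ⟨1, le_rfl, hM, fun x hx hxo => absurd hxo (by simpa using h x hx)⟩
  obtain ⟨m, hm1, hmM, hm⟩ := key
  refine ⟨2 * m * L, by positivity, by gcongr, fun x hx => ?_⟩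
  rcases Nat.even_or_odd' x with ⟨y, rfl | rfl⟩
  · have := hL y hx
    calc 2 * y ∣ 2 * L := Nat.mul_dvd_mul_left 2 this
      _ ∣ 2 * m * L := ⟨m, by ring⟩
  · exact (hm _ hx ⟨y, rfl⟩).trans ⟨2 * L, by ring⟩

theorem Bd_mono {N B C : ℕ} (h : Bd N B) (hBC : B ≤ C) : Bd N C := by
  intro P h1 h2
  obtain ⟨L, a, b, c⟩ := h P h1 h2
  exact ⟨L, a, b.trans hBC, c⟩

theorem Bd_zero : Bd 0 1 := by
  intro P hP _
  exact ⟨1, one_pos, le_rfl, fun x hx => by have := hP x hx; omega⟩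

theorem pow_aux (k : ℕ) (hk : 4 ≤ k) : 4 * k ≤ 2 ^ k := by
  induction k, hk using Nat.le_induction with
  | base => norm_num
  | succ k hk ih => rw [pow_succ]; omega

theorem Bd_main (N : ℕ) : Bd N (2 ^ (N + 1) - 1) := by
  have b1 : Bd 1 2 := Bd_step 0 1 1 1 rfl Bd_zero le_rfl (by intros; omega)
  have b2 : Bd 2 4 := Bd_step 1 2 1 2 rfl b1 le_rfl (by rintro m ⟨k, rfl⟩ _; omega)
  have b3 : Bd 3 12 := Bd_step 1 3 3 2 rfl b1 (by omega) (by rintro m ⟨k, rfl⟩ _; omega)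
  have b4 : Bd 4 24 := Bd_step 2 4 3 4 rfl b2 (by omega) (by rintro m ⟨k, rfl⟩ _; omega)
  have b5 : Bd 5 40 := Bd_step 2 5 5 4 rfl b2 (by omega) (by rintro m ⟨k, rfl⟩ _; omega)
  have b6 : Bd 6 120 := Bd_step 3 6 5 12 rfl b3 (by omega) (by rintro m ⟨k, rfl⟩ _; omega)
  induction N using Nat.strong_induction_on with
  | _ N ih =>
    by_cases h : N < 7
    · interval_cases N
      · exact Bd_zero
      · exact Bd_mono b1 (by norm_num)
      · exact Bd_mono b2 (by norm_num)
      · exact Bd_mono b3 (by norm_num)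
      · exact Bd_mono b4 (by norm_num)
      · exact Bd_mono b5 (by norm_num)
      · exact Bd_mono b6 (by norm_num)
    · refine Bd_mono (Bd_step (N / 2) N N _ rfl (ih _ (by omega)) (by omega)
        (fun m _ h => h)) ?_
      have h1 := pow_aux (N - N / 2) (by omega)
      have h2 : 2 * N ≤ 2 ^ (N - N / 2) := by omega
      have h3 : 2 ^ (N + 1) = 2 ^ (N - N / 2) * 2 ^ (N / 2 + 1) := by
        rw [← pow_add]; congr 1; omega
      have h4 : 1 ≤ 2 ^ (N / 2 + 1) := Nat.one_le_two_pow
      rw [h3, Nat.mul_sub]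
      have h5 := Nat.mul_le_mul_right (2 ^ (N / 2 + 1)) h2
      omega

/-- For `t ≥ 2` and positive integers `a₁ > a₂ > ⋯ > a_t` with `2^{a_j}+1` pairwise coprime,
`lcm(a₂, …, a_t) < 2^{a₁}`. -/
theorem stmt_14 (t : ℕ) (ht : 2 ≤ t)
    (a : Fin t → ℕ) (hpos : ∀ j, 0 < a j) (hanti : StrictAnti a)
    (hcop : ∀ j k, j ≠ k → Nat.Coprime (2 ^ a j + 1) (2 ^ a k + 1)) :
    (Finset.univ.filter (fun j : Fin t => j ≠ ⟨0, by omega⟩)).lcm a <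
      2 ^ a ⟨0, by omega⟩ := by
  have h0 := hpos ⟨0, by omega⟩
  obtain ⟨L, hL0, hLB, hL⟩ := Bd_main (a ⟨0, by omega⟩ - 1)
    (fun x => ∃ j : Fin t, j ≠ ⟨0, by omega⟩ ∧ a j = x)
    (by
      rintro x ⟨j, hj, rfl⟩
      have : a j < a ⟨0, by omega⟩ := hanti (by
        rw [Fin.lt_def]
        have : j.val ≠ 0 := fun h => hj (Fin.ext h)
        simp only
        omega)
      exact ⟨hpos j, by omega⟩)
    (by
      rintro e u v hu hv ⟨j, _, hj⟩ ⟨k, _, hk⟩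
      by_contra hne
      have hjk : j ≠ k := by
        rintro rfl
        exact hne (Nat.eq_of_mul_eq_mul_left (by positivity) (hj.symm.trans hk))
      have hc := hcop j k hjk
      have d : ∀ w, Odd w → 2 ^ 2 ^ e + 1 ∣ 2 ^ (2 ^ e * w) + 1 := by
        intro w hw
        have := Odd.nat_add_dvd_pow_add_pow (2 ^ 2 ^ e) 1 hw
        rwa [one_pow, ← pow_mul] at this
      rw [hj, hk] at hc
      have := Nat.eq_one_of_dvd_coprimes hc (d u hu) (d v hv)
      have : 0 < 2 ^ 2 ^ e := by positivity
      omega)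
  have h1 : (Finset.univ.filter (fun j : Fin t => j ≠ ⟨0, by omega⟩)).lcm a ∣ L := by
    apply Finset.lcm_dvd
    intro j hj
    exact hL _ ⟨j, (Finset.mem_filter.mp hj).2, rfl⟩
  have h2 := Nat.le_of_dvd hL0 h1
  rw [Nat.sub_add_cancel h0] at hLB
  have : 0 < 2 ^ a ⟨0, by omega⟩ := by positivity
  omega
end

section
/- Let t ≥ 1 and suppose V decomposes as an internal direct sum V = V_1 ⊕ ⋯ ⊕ V_t of subspaces which are pairwise B-orthogonal (B(v, w) = 0 whenever v ∈ V_i, w ∈ V_j with i ≠ j) and such that the restriction of B to each V_i is nondegenerate. Let g ∈ Sp(V, B) satisfy g(V_i) = V_i for all i, let g_i denote the restriction of g to V_i, and let o_i be the order of g_i. Assume that for every i: (1) the only g-invariant subspaces of V_i are 0 and V_i; (2) every orbit of the cyclic group generated by g_i on the nonzero vectors of V_i has exactly o_i elements; and (3) the orders o_1, …, o_t are pairwise distinct. Then every 2-subgroup P of Sp(V, B) satisfying g P g^{−1} = P is the trivial subgroup. -/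
lemma aux_orbit {V : Type*} [AddCommGroup V] [Module (ZMod 2) V] (g : V ≃ₗ[ZMod 2] V) (v : V)
    (m : ℕ) (hm : 0 < m) (h : (g ^ m) v = v) :
    Set.ncard {w : V | ∃ n : ℕ, (g ^ n) v = w} ≤ m := by
  classical
  have hk : ∀ k : ℕ, (g ^ (m * k)) v = v := by
    intro k
    induction k with
    | zero => simp
    | succ k ih => rw [Nat.mul_succ, pow_add, LinearEquiv.mul_apply, h, ih]
  have hsub : {w : V | ∃ n : ℕ, (g ^ n) v = w} ⊆
      ((Finset.range m).image (fun n => (g ^ n) v) : Finset V) := by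
    rintro w ⟨n, rfl⟩
    simp only [Finset.coe_image, Set.mem_image, Finset.mem_coe, Finset.mem_range]
    refine ⟨n % m, Nat.mod_lt _ hm, ?_⟩
    conv_rhs => rw [← Nat.mod_add_div n m, pow_add, LinearEquiv.mul_apply, hk]
  calc _ ≤ _ := Set.ncard_le_ncard hsub (Finset.finite_toSet _)
    _ = _ := Set.ncard_coe_finset _
    _ ≤ _ := Finset.card_image_le
    _ = m := Finset.card_range m

lemma aux_pow_mem {V : Type*} [AddCommGroup V] [Module (ZMod 2) V] (g : V ≃ₗ[ZMod 2] V)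
    (U : Submodule (ZMod 2) V) (hU : ∀ v ∈ U, g v ∈ U) (n : ℕ) : ∀ v ∈ U, (g ^ n) v ∈ U := by
  induction n with
  | zero => intro v hv; simpa using hv
  | succ n ih => intro v hv; rw [pow_succ, LinearEquiv.mul_apply]; exact ih _ (hU v hv)

lemma aux_supp {V : Type*} [AddCommGroup V] [Module (ZMod 2) V]
    (t : ℕ) (W : Fin t → Submodule (ZMod 2) V)
    (g : V ≃ₗ[ZMod 2] V) (hgW : ∀ i, ∀ v ∈ W i, g v ∈ W i)
    (o : Fin t → ℕ)
    (ho : ∀ i, 0 < o i ∧ (∀ v ∈ W i, (g ^ o i) v = v))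
    (horb : ∀ i, ∀ v ∈ W i, v ≠ 0 →
      Set.ncard {w : V | ∃ n : ℕ, (g ^ n) v = w} = o i)
    (hdist : Function.Injective o)
    (U : Submodule (ZMod 2) V) (hU : ∀ v ∈ U, g v ∈ U) (n : ℕ) :
    ∀ (s : Finset (Fin t)) (x : Fin t → V), s.card = n → s.Nonempty →
      (∀ i ∈ s, x i ∈ W i) → (∀ i ∈ s, x i ≠ 0) → ∑ i ∈ s, x i ∈ U →
      ∃ i, ∃ w ∈ W i, w ∈ U ∧ w ≠ 0 := by
  classical
  induction n using Nat.strong_induction_on with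
  | _ n ih =>
    intro s x hs hne hW hx hsum
    by_cases h1 : s.card ≤ 1
    · have : s.card = 1 := le_antisymm h1 hne.card_pos
      obtain ⟨i, rfl⟩ := Finset.card_eq_one.1 this
      exact ⟨i, x i, hW i (by simp), by simpa using hsum, hx i (by simp)⟩
    · obtain ⟨a, ha, b, hb, hab⟩ := Finset.one_lt_card.1 (not_le.1 h1)
      obtain ⟨i, hi, j, hj, hij⟩ : ∃ i ∈ s, ∃ j ∈ s, o i < o j := by
        rcases lt_or_gt_of_ne (fun h => hab (hdist h)) with h | h
        · exact ⟨a, ha, b, hb, h⟩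
        · exact ⟨b, hb, a, ha, h⟩
      let y : Fin t → V := fun k => (g ^ o i) (x k) - x k
      have hyi : y i = 0 := by simp [y, (ho i).2 _ (hW i hi)]
      have hyj : y j ≠ 0 := by
        intro h
        have h2 := aux_orbit g (x j) (o i) (ho i).1 (sub_eq_zero.1 h)
        rw [horb j _ (hW j hj) (hx j hj)] at h2
        omega
      refine ih (s.filter (fun k => y k ≠ 0)).card ?_ (s.filter (fun k => y k ≠ 0)) y rfl
        ⟨j, by simp [hj, hyj]⟩ ?_ ?_ ?_
      · rw [← hs]
        apply Finset.card_lt_card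
        refine ⟨Finset.filter_subset _ _, fun h => ?_⟩
        have := h hi
        simp [hyi] at this
      · intro k hk
        have hk' := hW k (Finset.mem_filter.1 hk).1
        exact (W k).sub_mem (aux_pow_mem g (W k) (hgW k) _ _ hk') hk'
      · intro k hk
        exact (Finset.mem_filter.1 hk).2
      · rw [Finset.sum_filter_ne_zero]
        have : ∑ k ∈ s, y k = (g ^ o i) (∑ k ∈ s, x k) - ∑ k ∈ s, x k := by
          simp [y, Finset.sum_sub_distrib, map_sum]
        rw [this]
        exact U.sub_mem (aux_pow_mem g U hU _ _ hsum) hsum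


/-- Let `V` be a finite-dimensional `𝔽₂`-vector space with an alternating nondegenerate
bilinear form `B`, decomposed as an internal orthogonal direct sum `V = V₁ ⊕ ⋯ ⊕ V_t`
with `B` nondegenerate on each piece. Let `g` be a `B`-preserving automorphism stabilizing
each `V_i`, whose restriction `g_i` to `V_i` has order `o i`; assume each `V_i` has no
proper nonzero `g`-invariant subspace, every orbit of `⟨g_i⟩` on nonzero vectors of `V_i`
has exactly `o i` elements, and the `o i` are pairwise distinct. Then any 2-subgroup `P`
of `Sp(V, B)` normalized by `g` is trivial. -/
theorem stmt_15 (V : Type*) [AddCommGroup V] [Module (ZMod 2) V]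
    [FiniteDimensional (ZMod 2) V]
    (B : LinearMap.BilinForm (ZMod 2) V)
    (halt : ∀ v, B v v = 0) (hnd : B.Nondegenerate)
    (t : ℕ) (ht : 1 ≤ t) (W : Fin t → Submodule (ZMod 2) V)
    (hinternal : DirectSum.IsInternal W)
    (horth : ∀ i j, i ≠ j → ∀ v ∈ W i, ∀ w ∈ W j, B v w = 0)
    (hndi : ∀ i, ∀ v ∈ W i, (∀ w ∈ W i, B v w = 0) → v = 0)
    (g : V ≃ₗ[ZMod 2] V) (hg : ∀ v w, B (g v) (g w) = B v w)
    (hgW : ∀ i, Submodule.map (g : V →ₗ[ZMod 2] V) (W i) = W i)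
    (o : Fin t → ℕ)
    (ho : ∀ i, 0 < o i ∧ (∀ v ∈ W i, (g ^ o i) v = v) ∧
      ∀ m : ℕ, 0 < m → (∀ v ∈ W i, (g ^ m) v = v) → o i ≤ m)
    (hirr : ∀ i, ∀ U : Submodule (ZMod 2) V, U ≤ W i → (∀ v ∈ U, g v ∈ U) →
      U = ⊥ ∨ U = W i)
    (horb : ∀ i, ∀ v ∈ W i, v ≠ 0 →
      Set.ncard {w : V | ∃ n : ℕ, (g ^ n) v = w} = o i)
    (hdist : Function.Injective o)
    (P : Subgroup (V ≃ₗ[ZMod 2] V)) (hP2 : IsPGroup 2 P)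
    (hPSp : ∀ f ∈ P, ∀ v w, B (f v) (f w) = B v w)
    (hconj : ∀ f : V ≃ₗ[ZMod 2] V, f ∈ P ↔ g * f * g⁻¹ ∈ P) :
    P = ⊥ := by
  classical
  have hgW' : ∀ i, ∀ v ∈ W i, g v ∈ W i := by
    intro i v hv
    rw [← hgW i]
    exact ⟨v, hv, rfl⟩
  have hrefl : B.IsRefl := LinearMap.IsAlt.isRefl halt
  -- no nonzero totally isotropic invariant subspace
  have key : ∀ U : Submodule (ZMod 2) V, (∀ v ∈ U, g v ∈ U) →
      (∀ v ∈ U, ∀ w ∈ U, B v w = 0) → U = ⊥ := by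
    intro U hU hiso
    by_contra hne
    obtain ⟨u, hu, hu0⟩ := (Submodule.ne_bot_iff U).1 hne
    have htop : u ∈ ⨆ i, W i := by
      rw [hinternal.submodule_iSup_eq_top]; trivial
    obtain ⟨x, hx⟩ := (Submodule.mem_iSup_iff_exists_finsupp W u).1 htop
    obtain ⟨hxW, hxs⟩ := hx
    rw [Finsupp.sum] at hxs
    obtain ⟨i, w, hw, hwU, hw0⟩ := aux_supp t W g hgW' o (fun i => ⟨(ho i).1, (ho i).2.1⟩) horb
      hdist U hU _ x.support x rfl (by
        rw [Finset.nonempty_iff_ne_empty]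
        intro h
        rw [h] at hxs
        exact hu0 (by simpa using hxs.symm)) (fun i _ => hxW i)
        (fun i hi => Finsupp.mem_support_iff.1 hi) (by rw [hxs]; exact hu)
    rcases hirr i (U ⊓ W i) inf_le_right
      (fun v hv => ⟨hU v hv.1, hgW' i v hv.2⟩) with h | h
    · have : w ∈ U ⊓ W i := ⟨hwU, hw⟩
      rw [h] at this
      exact hw0 (by simpa using this)
    · apply hw0
      apply hndi i w hw
      intro z hz
      rw [← h] at hz
      exact hiso w hwU z hz.1
  -- fixed subspace
  let F : Submodule (ZMod 2) V :=
    { carrier := {v | ∀ f ∈ P, f v = v}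
      add_mem' := by
        intro a b ha hb f hf
        rw [map_add, ha f hf, hb f hf]
      zero_mem' := by
        intro f _
        exact map_zero f
      smul_mem' := by
        intro c a ha f hf
        rw [map_smul, ha f hf] }
  have hF : ∀ v, v ∈ F ↔ ∀ f ∈ P, f v = v := fun v => Iff.rfl
  have hFg : ∀ v ∈ F, g v ∈ F := by
    intro v hv f hf
    have h1 : g⁻¹ * f * g ∈ P := by
      rw [hconj]
      simpa [mul_assoc] using hf
    have h2 := hv _ h1
    have h3 : g ((g⁻¹ * f * g) v) = (g * (g⁻¹ * f * g)) v := rfl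
    rw [h2] at h3
    have : g * (g⁻¹ * f * g) = f * g := by group
    rw [this] at h3
    exact h3.symm
  have hFgi : ∀ v ∈ F, g⁻¹ v ∈ F := by
    intro v hv f hf
    have h1 : g * f * g⁻¹ ∈ P := (hconj f).1 hf
    have h2 := hv _ h1
    have h3 : g⁻¹ ((g * f * g⁻¹) v) = (g⁻¹ * (g * f * g⁻¹)) v := rfl
    rw [h2] at h3
    have : g⁻¹ * (g * f * g⁻¹) = f * g⁻¹ := by group
    rw [this] at h3
    exact h3.symm
  let N := B.orthogonal F
  have hN : ∀ v, v ∈ N ↔ ∀ w ∈ F, B w v = 0 := fun v => Iff.rfl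
  have hNg : ∀ v ∈ N, g v ∈ N := by
    intro v hv w hw
    have := hv _ (hFgi w hw)
    have h2 : B (g (g⁻¹ w)) (g v) = 0 := by rw [hg]; exact this
    have h3 : g (g⁻¹ w) = w := by
      change (g * g⁻¹) w = w
      simp
    rwa [h3] at h2
  have hFN : F ⊓ N = ⊥ := by
    apply key
    · intro v hv
      exact ⟨hFg v hv.1, hNg v hv.2⟩
    · intro v hv w hw
      exact hw.2 v hv.1
  have hPN : ∀ f ∈ P, ∀ v ∈ N, f v ∈ N := by
    intro f hf v hv w hw
    have h := hPSp f hf w v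
    rw [hw f hf] at h
    exact h.trans (hv w hw)
  have hNbot : N = ⊥ := by
    by_contra hne
    let act : MulAction P N :=
      { smul := fun f v => ⟨(f : V ≃ₗ[ZMod 2] V) v, hPN f f.2 v v.2⟩
        one_smul := fun v => Subtype.ext rfl
        mul_smul := fun a b v => Subtype.ext rfl }
    haveI : Finite V := Module.finite_of_finite (ZMod 2)
    haveI : Fact (Nat.Prime 2) := ⟨Nat.prime_two⟩
    have hcard : 2 ∣ Nat.card N := by
      haveI : Nontrivial N := Submodule.nontrivial_iff_ne_bot.2 hne
      rw [Module.natCard_eq_pow_finrank (K := ZMod 2), Nat.card_zmod]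
      exact dvd_pow_self 2 (Module.finrank_pos).ne'
    have h0 : (0 : N) ∈ MulAction.fixedPoints P N := by
      intro f
      apply Subtype.ext
      exact map_zero (f : V ≃ₗ[ZMod 2] V)
    obtain ⟨b, hb, hb0⟩ := hP2.exists_fixed_point_of_prime_dvd_card_of_fixed_point N hcard h0
    apply hb0
    have hbF : (b : V) ∈ F := by
      intro f hf
      exact congrArg Subtype.val (hb ⟨f, hf⟩)
    have : (b : V) ∈ F ⊓ N := ⟨hbF, b.2⟩
    rw [hFN] at this
    exact Subtype.ext (by simpa using this.symm)
  have hcompl : IsCompl F N :=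
    (LinearMap.BilinForm.isCompl_orthogonal_iff_disjoint hrefl).2 (disjoint_iff.2 hFN)
  have hFtop : F = ⊤ := by
    have := hcompl.sup_eq_top
    rwa [hNbot, sup_bot_eq] at this
  rw [Subgroup.eq_bot_iff_forall]
  intro f hf
  ext v
  have : v ∈ F := by rw [hFtop]; trivial
  exact this f hf
end
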